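/- Let p ∈ [1,∞), d > 1, and let μ, ν be probability measures on ℝ^d with finite p-th moments which share the same copula, i.e. there exists a d-copula C such that the joint distribution functions satisfy H_μ(x₁,…,x_d) = C(F₁(x₁),…,F_d(x_d)) and H_ν(y₁,…,y_d) = C(G₁(y₁),…,G_d(y_d)) for all x, y ∈ ℝ^d, where F_i and G_i are the marginal distribution functions of μ and ν. Then, with ℝ^d equipped with the p-norm, W_p(μ,ν)^p = ∫₀¹ Σ_{i=1}^d |F_i⁻¹(u) − G_i⁻¹(u)|^p du. -/

import Mathlib

/-!
The Wasserstein cost with the `p`-norm splits into a sum over coordinates, so any coupling costs at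
least the sum of the one-dimensional optimal costs; a common copula makes a single coupling optimal
in every coordinate at once.

*Lower bound.* On the line, `((x - y)⁺)^p = ∫_y^x p (x - s)^(p-1) ds` is the area of the set of
`(s, v)` with `y ≤ s` and `x ∈ A`, where `A = {x | s < x, 0 < v < p (x - s)^(p-1)}` is an upper set
(`volume_region_eq`). By Tonelli the cost of a coupling is an integral of the masses it gives to
`A × (-∞, s]`, and each of these is smallest for the comonotone coupling `u ↦ (F⁻¹ u, G⁻¹ u)`, for
which `{F⁻¹ u ∉ A}` and `{G⁻¹ u ≤ s}` are nested (`comonotone_prod_le`). Together with the symmetric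
term this is `comonotone_lintegral_le`.

*Upper bound.* The copula `C` is the distribution function of a probability measure `P` on the cube
(`exists_copula_measure`): the cell masses of `C` on the grid of mesh `1 / N` are nonnegative and
telescope (`sum_cellSum`), so they define discrete measures, and a weak limit point of these works
because `C` is Lipschitz. The marginals of `P` are uniform (`map_eval_copula`), and the coordinatewise
quantile functions of `μ` and `ν` push `P` to `μ` and `ν` (`map_copula_quantile`). Applying both to
one random point of law `P` gives a coupling that is comonotone in each coordinate, whose cost is
the right-hand side.
-/

open MeasureTheory ENNReal Set

/-- Generalized inverse (quantile function) of a distribution function `F`. -/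
noncomputable def qinv (F : ℝ → ℝ) (u : ℝ) : ℝ := sInf {x : ℝ | u ≤ F x}

/-- `π` is a coupling of `μ` and `ν`. -/
def IsCoupling {α : Type*} [MeasurableSpace α] (π : MeasureTheory.Measure (α × α))
    (μ ν : MeasureTheory.Measure α) : Prop :=
  π.map Prod.fst = μ ∧ π.map Prod.snd = ν

/-- A `d`-copula: grounded, `d`-increasing, with uniform margins. The `d`-increasing
condition is stated as nonnegativity of the alternating sum over the vertices of the
box `∏ i {a i, b i}`, the vertex with `v i = b i` exactly for `i ∈ s` carrying the
sign `(-1)^{#{i : v i = a i}} = (-1)^{d - #s}`. -/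
def IsCopula (d : ℕ) (C : (Fin d → ℝ) → ℝ) : Prop :=
  (∀ u : Fin d → ℝ, (∀ i, u i ∈ Icc (0:ℝ) 1) → (∃ i, u i = 0) → C u = 0) ∧
  (∀ a b : Fin d → ℝ, (∀ i, a i ∈ Icc (0:ℝ) 1) → (∀ i, b i ∈ Icc (0:ℝ) 1) →
    (∀ i, a i ≤ b i) →
    0 ≤ ∑ s : Finset (Fin d),
          (-1 : ℝ) ^ (d - s.card) * C (fun i => if i ∈ s then b i else a i)) ∧
  (∀ i : Fin d, ∀ t ∈ Icc (0:ℝ) 1, C (fun j => if j = i then t else 1) = t)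

/-- The `p`-th power of the `p`-Wasserstein distance on `ℝ^d` with the `p`-norm. -/
noncomputable def WpPowD (d : ℕ) (p : ℝ) (μ ν : MeasureTheory.Measure (Fin d → ℝ)) : ℝ≥0∞ :=
  ⨅ π ∈ {π : MeasureTheory.Measure ((Fin d → ℝ) × (Fin d → ℝ)) | IsCoupling π μ ν},
    ∫⁻ z, ENNReal.ofReal (∑ i, |z.1 i - z.2 i| ^ p) ∂π

/-! ### One-dimensional optimality of the comonotone coupling -/

/-- `((x - y)⁺)^p` as the area of a planar region: `∫_y^x p (x - s)^(p-1) ds`. The region is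
`{(s, v) : y ≤ s, (s, v) ∈ A_x}` where `A_x` grows with `x`. -/
lemma volume_region_eq (p : ℝ) (hp : 1 ≤ p) (x y : ℝ) :
    volume {w : ℝ × ℝ | y ≤ w.1 ∧ w.1 < x ∧ 0 < w.2 ∧ w.2 < p * (x - w.1) ^ (p - 1)}
      = ENNReal.ofReal ((max (x - y) 0) ^ p) := by
  have hset : {w : ℝ × ℝ | y ≤ w.1 ∧ w.1 < x ∧ 0 < w.2 ∧ w.2 < p * (x - w.1) ^ (p - 1)}
      = regionBetween (fun _ => 0) (fun s => p * (x - s) ^ (p - 1)) (Ico y x) := by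
    ext w
    simp only [regionBetween, mem_ofPred_eq, mem_Ico, mem_Ioo, and_assoc]
  have hcont : Continuous fun s : ℝ => p * (x - s) ^ (p - 1) :=
    continuous_const.mul ((continuous_const.sub continuous_id).rpow_const
      fun _ => Or.inr (by linarith))
  rcases le_or_gt x y with hxy | hxy
  · rw [hset, Ico_eq_empty (not_lt.2 hxy), max_eq_right (by linarith),
      Real.zero_rpow (by linarith)]
    simp [regionBetween]
  · rw [hset, Measure.volume_eq_prod, volume_regionBetween_eq_integral]
    · congr 1
      simp only [Pi.sub_apply, sub_zero]
      rw [integral_Ico_eq_integral_Ioc, ← intervalIntegral.integral_of_le hxy.le,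
        intervalIntegral.integral_const_mul,
        intervalIntegral.integral_comp_sub_left (fun s => s ^ (p - 1)) x, sub_self,
        integral_rpow (Or.inl (by linarith)), max_eq_left (by linarith), sub_add_cancel,
        Real.zero_rpow (by linarith)]
      field_simp
      ring
    · exact integrableOn_const (by simp) (by simp)
    · exact hcont.continuousOn.integrableOn_Icc.mono_set Ico_subset_Icc_self
    · exact measurableSet_Ico
    · intro s hs
      exact mul_nonneg (by linarith) (Real.rpow_nonneg (by linarith [hs.2]) _)

/-- Among couplings of two given laws on `ℝ`, the comonotone one gives the least mass to
`A ×ˢ D` with `A` an upper and `D` a lower set. -/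
lemma comonotone_prod_le (P : Measure (ℝ × ℝ)) [IsFiniteMeasure P] (f g : ℝ → ℝ)
    (hf : Measurable f) (hg : Measurable g)
    (hfm : MonotoneOn f (Ioo 0 1)) (hgm : MonotoneOn g (Ioo 0 1))
    (h1 : P.map Prod.fst = (volume.restrict (Ioo (0:ℝ) 1)).map f)
    (h2 : P.map Prod.snd = (volume.restrict (Ioo (0:ℝ) 1)).map g)
    (A D : Set ℝ) (hA : MeasurableSet A) (hD : MeasurableSet D)
    (hAu : IsUpperSet A) (hDl : IsLowerSet D) :
    (volume.restrict (Ioo (0:ℝ) 1)) {u | f u ∈ A ∧ g u ∈ D} ≤ P {z | z.1 ∈ A ∧ z.2 ∈ D} := by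
  set ρ := volume.restrict (Ioo (0:ℝ) 1) with hρ
  have hae : ∀ᵐ u ∂ρ, u ∈ Ioo (0:ℝ) 1 := ae_restrict_mem measurableSet_Ioo
  have e1 : ρ (f ⁻¹' Aᶜ) = P (Prod.fst ⁻¹' Aᶜ) := by
    rw [← Measure.map_apply hf hA.compl, ← h1, Measure.map_apply measurable_fst hA.compl]
  have e2 : ρ (g ⁻¹' D) = P (Prod.snd ⁻¹' D) := by
    rw [← Measure.map_apply hg hD, ← h2, Measure.map_apply measurable_snd hD]
  by_cases hex : ∃ u ∈ Ioo (0:ℝ) 1, f u ∈ A ∧ g u ∈ D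
  · obtain ⟨u₀, hu₀, hfu, hgu⟩ := hex
    -- on `(0, 1)`, `f u ∉ A` forces `u < u₀`, which forces `g u ∈ D`
    have hdisj : Disjoint {u | f u ∈ A ∧ g u ∈ D} (f ⁻¹' Aᶜ) := by
      rw [Set.disjoint_left]
      intro u hu hu'
      exact hu' hu.1
    have hle : ρ {u | f u ∈ A ∧ g u ∈ D} + ρ (f ⁻¹' Aᶜ) ≤ ρ (g ⁻¹' D) := by
      rw [← measure_union hdisj (hf hA.compl)]
      refine measure_mono_ae ?_
      filter_upwards [hae] with u hu h
      rcases h with h | h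
      · exact h.2
      · have : u ≤ u₀ := by
          by_contra hlt
          exact h (hAu (hfm hu₀ hu (not_le.1 hlt).le) hfu)
        exact hDl (hgm hu hu₀ this) hgu
    have hP : P (Prod.snd ⁻¹' D) ≤ P {z | z.1 ∈ A ∧ z.2 ∈ D} + P (Prod.fst ⁻¹' Aᶜ) := by
      refine (measure_mono ?_).trans (measure_union_le _ _)
      intro z hz
      by_cases h : z.1 ∈ A
      · exact Or.inl ⟨h, hz⟩
      · exact Or.inr h
    rw [e2, e1] at hle
    exact (ENNReal.add_le_add_iff_right (measure_ne_top P _)).1 (hle.trans hP)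
  · have : ρ {u | f u ∈ A ∧ g u ∈ D} = 0 := by
      rw [measure_eq_zero_iff_ae_notMem]
      filter_upwards [hae] with u hu h
      exact hex ⟨u, hu, h⟩
    rw [this]
    exact zero_le

/-- Half of the one-dimensional optimality statement: the cost `((x - y)⁺)^p`. -/
lemma comonotone_lintegral_pos_le (p : ℝ) (hp : 1 ≤ p)
    (P : Measure (ℝ × ℝ)) [IsFiniteMeasure P] (f g : ℝ → ℝ)
    (hf : Measurable f) (hg : Measurable g)
    (hfm : MonotoneOn f (Ioo 0 1)) (hgm : MonotoneOn g (Ioo 0 1))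
    (h1 : P.map Prod.fst = (volume.restrict (Ioo (0:ℝ) 1)).map f)
    (h2 : P.map Prod.snd = (volume.restrict (Ioo (0:ℝ) 1)).map g) :
    ∫⁻ u in Ioo (0:ℝ) 1, ENNReal.ofReal ((max (f u - g u) 0) ^ p)
      ≤ ∫⁻ z, ENNReal.ofReal ((max (z.1 - z.2) 0) ^ p) ∂P := by
  set K : Set ((ℝ × ℝ) × (ℝ × ℝ)) := {q | q.2.2 ≤ q.1.1 ∧ q.1.1 < q.2.1 ∧ 0 < q.1.2 ∧
    q.1.2 < p * (q.2.1 - q.1.1) ^ (p - 1)} with hK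
  have hKm : MeasurableSet K := by
    simp only [hK, Set.ofPred_and]
    refine MeasurableSet.inter ?_ (MeasurableSet.inter ?_ (MeasurableSet.inter ?_ ?_))
    · exact measurableSet_le (by fun_prop) (by fun_prop)
    all_goals exact measurableSet_lt (by fun_prop) (by fun_prop)
  -- Tonelli: the cost is the integral over `(s, v)` of the masses of rectangles `A ×ˢ D`
  have key : ∀ T : Measure (ℝ × ℝ), IsFiniteMeasure T →
      ∫⁻ z, ENNReal.ofReal ((max (z.1 - z.2) 0) ^ p) ∂T
        = ∫⁻ w : ℝ × ℝ, T {z | z.1 ∈ {x | w.1 < x ∧ 0 < w.2 ∧ w.2 < p * (x - w.1) ^ (p - 1)} ∧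
            z.2 ∈ Iic w.1} := by
    intro T _
    calc _ = ∫⁻ z, volume ((fun w => (w, z)) ⁻¹' K) ∂T :=
          lintegral_congr fun z => (volume_region_eq p hp z.1 z.2).symm
      _ = (volume.prod T) K := (Measure.prod_apply_symm hKm).symm
      _ = ∫⁻ w, T (Prod.mk w ⁻¹' K) := Measure.prod_apply hKm
      _ = _ := by
          refine lintegral_congr fun w => ?_
          congr 1
          ext z
          simp only [hK, mem_preimage, mem_ofPred_eq, mem_Iic]
          tauto
  have hfg : Measurable fun u => (f u, g u) := hf.prodMk hg
  have hcost : Measurable fun z : ℝ × ℝ => ENNReal.ofReal ((max (z.1 - z.2) 0) ^ p) := by fun_prop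
  rw [← lintegral_map (f := fun z : ℝ × ℝ => ENNReal.ofReal ((max (z.1 - z.2) 0) ^ p)) hcost hfg,
    key _ inferInstance, key P inferInstance]
  refine lintegral_mono fun w => ?_
  have hAm : MeasurableSet {x | w.1 < x ∧ 0 < w.2 ∧ w.2 < p * (x - w.1) ^ (p - 1)} := by
    simp only [Set.ofPred_and]
    refine MeasurableSet.inter ?_ (MeasurableSet.inter (MeasurableSet.const _) ?_)
    all_goals exact measurableSet_lt (by fun_prop) (by fun_prop)
  rw [Measure.map_apply hfg]
  · refine comonotone_prod_le P f g hf hg hfm hgm h1 h2 _ _ hAm measurableSet_Iic ?_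
      (isLowerSet_Iic _)
    rintro a b hab ⟨h₁, h₂, h₃⟩
    refine ⟨h₁.trans_le hab, h₂, h₃.trans_le ?_⟩
    gcongr
  · exact (measurable_fst hAm).inter (measurable_snd measurableSet_Iic)

lemma abs_rpow_eq_add (p : ℝ) (hp : 1 ≤ p) (a b : ℝ) :
    ENNReal.ofReal (|a - b| ^ p)
      = ENNReal.ofReal ((max (a - b) 0) ^ p) + ENNReal.ofReal ((max (b - a) 0) ^ p) := by
  have h0 : (0:ℝ) ^ p = 0 := Real.zero_rpow (by linarith)
  rcases le_total a b with h | h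
  · rw [max_eq_right (by linarith : a - b ≤ 0), max_eq_left (by linarith : 0 ≤ b - a), h0,
      abs_of_nonpos (by linarith), neg_sub]
    simp
  · rw [max_eq_left (by linarith : 0 ≤ a - b), max_eq_right (by linarith : b - a ≤ 0), h0,
      abs_of_nonneg (by linarith)]
    simp

/-- The comonotone coupling minimizes the cost `|x - y|^p` on the line. -/
lemma comonotone_lintegral_le (p : ℝ) (hp : 1 ≤ p)
    (P : Measure (ℝ × ℝ)) [IsFiniteMeasure P] (f g : ℝ → ℝ)
    (hf : Measurable f) (hg : Measurable g)
    (hfm : MonotoneOn f (Ioo 0 1)) (hgm : MonotoneOn g (Ioo 0 1))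
    (h1 : P.map Prod.fst = (volume.restrict (Ioo (0:ℝ) 1)).map f)
    (h2 : P.map Prod.snd = (volume.restrict (Ioo (0:ℝ) 1)).map g) :
    ∫⁻ u in Ioo (0:ℝ) 1, ENNReal.ofReal (|f u - g u| ^ p)
      ≤ ∫⁻ z, ENNReal.ofReal (|z.1 - z.2| ^ p) ∂P := by
  simp only [abs_rpow_eq_add p hp]
  rw [lintegral_add_left (by fun_prop), lintegral_add_left (by fun_prop)]
  refine add_le_add (comonotone_lintegral_pos_le p hp P f g hf hg hfm hgm h1 h2) ?_
  have := comonotone_lintegral_pos_le p hp (P.map Prod.swap) g f hg hf hgm hfm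
    (by rw [Measure.map_map measurable_fst measurable_swap]; exact h2)
    (by rw [Measure.map_map measurable_snd measurable_swap]; exact h1)
  rwa [lintegral_map (by fun_prop) measurable_swap] at this

/-! ### Quantile functions -/

/-- The quantile function cut off to `0` outside `(0, 1)`, where `qinv` takes junk values; unlike
`qinv` it is easily seen to be measurable. -/
noncomputable def qcut (F : ℝ → ℝ) (u : ℝ) : ℝ :=
  open Classical in if u ∈ Ioo (0:ℝ) 1 then qinv F u else 0

lemma qcut_of_mem (F : ℝ → ℝ) {u : ℝ} (hu : u ∈ Ioo (0:ℝ) 1) : qcut F u = qinv F u := if_pos hu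

/-- Galois connection between a distribution function and its generalized inverse. -/
lemma qinv_le_iff (m : Measure ℝ) [IsProbabilityMeasure m] (F : ℝ → ℝ)
    (hF : ∀ t, F t = (m (Iic t)).toReal) {u : ℝ} (hu : u ∈ Ioo (0:ℝ) 1) (x : ℝ) :
    qinv F u ≤ x ↔ u ≤ F x := by
  have hFc : F = ProbabilityTheory.cdf m := by
    ext t
    rw [hF, ProbabilityTheory.cdf_eq_real]
    rfl
  subst hFc
  obtain ⟨a, ha⟩ : ∃ a, ProbabilityTheory.cdf m a < u :=
    ((ProbabilityTheory.tendsto_cdf_atBot m).eventually (gt_mem_nhds hu.1)).exists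
  obtain ⟨b, hb⟩ : ∃ b, u < ProbabilityTheory.cdf m b :=
    ((ProbabilityTheory.tendsto_cdf_atTop m).eventually (lt_mem_nhds hu.2)).exists
  have hbdd : BddBelow {x : ℝ | u ≤ ProbabilityTheory.cdf m x} := by
    refine ⟨a, fun y hy => ?_⟩
    by_contra hlt
    exact absurd (ProbabilityTheory.monotone_cdf m (not_le.1 hlt).le)
      (not_le.2 (ha.trans_le hy))
  constructor
  · intro h
    -- right continuity: the infimum is attained
    have hlim : Filter.Tendsto (ProbabilityTheory.cdf m) (nhdsWithin x (Ioi x))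
        (nhds (ProbabilityTheory.cdf m x)) :=
      ((ProbabilityTheory.cdf m).right_continuous x).mono_left
        (nhdsWithin_mono _ Ioi_subset_Ici_self)
    refine ge_of_tendsto hlim ?_
    filter_upwards [self_mem_nhdsWithin] with y hy
    obtain ⟨z, hz, hzy⟩ := exists_lt_of_csInf_lt ⟨b, hb.le⟩ (h.trans_lt hy)
    exact le_trans hz (ProbabilityTheory.monotone_cdf m hzy.le)
  · intro h
    exact csInf_le hbdd h

lemma measurable_qcut (m : Measure ℝ) [IsProbabilityMeasure m] (F : ℝ → ℝ)
    (hF : ∀ t, F t = (m (Iic t)).toReal) : Measurable (qcut F) := by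
  refine measurable_of_Iic fun x => ?_
  have : qcut F ⁻¹' Iic x
      = (Ioo 0 1 ∩ Iic (F x)) ∪ ((Ioo 0 1)ᶜ ∩ {_u | (0:ℝ) ≤ x}) := by
    ext u
    by_cases hu : u ∈ Ioo (0:ℝ) 1
    · simp only [mem_preimage, qcut_of_mem F hu, mem_Iic, qinv_le_iff m F hF hu, mem_union,
        mem_inter_iff, hu, mem_compl_iff, true_and, not_true_eq_false, false_and, or_false]
    · simp only [mem_preimage, qcut, hu, if_false, mem_Iic, mem_union, mem_inter_iff,
        mem_compl_iff, false_and, not_false_eq_true, true_and, false_or, mem_ofPred_eq]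
  rw [this]
  exact (measurableSet_Ioo.inter measurableSet_Iic).union
    (measurableSet_Ioo.compl.inter (MeasurableSet.const _))

lemma monotoneOn_qcut (m : Measure ℝ) [IsProbabilityMeasure m] (F : ℝ → ℝ)
    (hF : ∀ t, F t = (m (Iic t)).toReal) : MonotoneOn (qcut F) (Ioo 0 1) := by
  intro u hu v hv huv
  rw [qcut_of_mem F hu, qcut_of_mem F hv, qinv_le_iff m F hF hu]
  exact huv.trans ((qinv_le_iff m F hF hv _).1 le_rfl)

lemma volume_Ioo_inter_Iic (t : ℝ) :
    (volume.restrict (Ioo (0:ℝ) 1)) (Iic t) = ENNReal.ofReal (min t 1) := by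
  rw [restrict_Ioo_eq_restrict_Ioc, Measure.restrict_apply measurableSet_Iic, inter_comm,
    Ioc_inter_Iic, Real.volume_Ioc, sub_zero, min_comm]

lemma map_qcut (m : Measure ℝ) [IsProbabilityMeasure m] (F : ℝ → ℝ)
    (hF : ∀ t, F t = (m (Iic t)).toReal) :
    (volume.restrict (Ioo (0:ℝ) 1)).map (qcut F) = m := by
  refine Measure.ext_of_Iic _ _ fun x => ?_
  rw [Measure.map_apply (measurable_qcut m F hF) measurableSet_Iic]
  have hle : F x ≤ 1 := by
    rw [hF]
    exact ENNReal.toReal_le_of_le_ofReal zero_le_one (by simpa using prob_le_one)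
  have : (volume.restrict (Ioo (0:ℝ) 1)) (qcut F ⁻¹' Iic x)
      = (volume.restrict (Ioo (0:ℝ) 1)) (Iic (F x)) := by
    refine measure_congr ?_
    filter_upwards [ae_restrict_mem measurableSet_Ioo] with u hu
    refine propext ?_
    change qcut F u ≤ x ↔ u ≤ F x
    rw [qcut_of_mem F hu, qinv_le_iff m F hF hu]
  rw [this, volume_Ioo_inter_Iic, min_eq_left hle, hF, ENNReal.ofReal_toReal (measure_ne_top _ _)]

/-! ### Copulas on finite grids -/

/-- The alternating sum of `f` over the vertices of the unit cell with lower corner `k`. -/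
noncomputable def cellSum {d : ℕ} (f : (Fin d → ℕ) → ℝ) (k : Fin d → ℕ) : ℝ :=
  ∑ s : Finset (Fin d), (-1 : ℝ) ^ (d - s.card) * f (fun i => if i ∈ s then k i + 1 else k i)

lemma alternating_prod {d : ℕ} (a b : Fin d → ℝ) :
    ∑ s : Finset (Fin d), (-1 : ℝ) ^ (d - s.card) * ∏ i, (if i ∈ s then b i else a i)
      = ∏ i, (b i - a i) := by
  simp only [sub_eq_add_neg]
  rw [Finset.prod_add]
  simp only [Finset.powerset_univ]
  refine Finset.sum_congr rfl fun s _ => ?_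
  rw [Finset.prod_neg, ← Finset.compl_eq_univ_sdiff, Finset.card_compl, Fintype.card_fin,
    Finset.prod_ite]
  have h1 : Finset.univ.filter (fun i => i ∈ s) = s := by ext; simp
  have h2 : Finset.univ.filter (fun i => i ∉ s) = sᶜ := by ext; simp
  rw [h1, h2]
  ring

/-- Multidimensional telescoping for a grounded function: the cell sums over a box with lower
corner `0` add up to the value at the upper corner. It is checked on products of one-variable
functions, of which every function on the grid is a linear combination. -/
lemma sum_cellSum {d : ℕ} (f : (Fin d → ℕ) → ℝ) (hf : ∀ k, (∃ i, k i = 0) → f k = 0)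
    (n : Fin d → ℕ) :
    ∑ k ∈ Fintype.piFinset (fun i => Finset.range (n i)), cellSum f k = f n := by
  set B := Fintype.piFinset (fun i => Finset.range (n i + 1)) with hB
  have hrep : ∀ k : Fin d → ℕ, (∀ i, k i ≤ n i) →
      f k = ∑ m ∈ B, f m * ∏ i, (if k i = m i then (1:ℝ) else 0) := by
    intro k hk
    rw [Finset.sum_eq_single k]
    · simp
    · intro m _ hmk
      obtain ⟨i, hi⟩ := Function.ne_iff.1 hmk
      rw [Finset.prod_eq_zero (Finset.mem_univ i) (if_neg (Ne.symm hi)), mul_zero]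
    · intro h
      refine absurd ?_ h
      rw [hB, Fintype.mem_piFinset]
      intro i
      exact Finset.mem_range.2 (Nat.lt_succ_of_le (hk i))
  have hcell : ∀ k ∈ Fintype.piFinset (fun i => Finset.range (n i)), cellSum f k
      = ∑ m ∈ B, f m * ∏ i, ((if k i + 1 = m i then (1:ℝ) else 0) - if k i = m i then 1 else 0) := by
    intro k hk
    rw [Fintype.mem_piFinset] at hk
    have hk' : ∀ i, k i < n i := fun i => Finset.mem_range.1 (hk i)
    unfold cellSum
    calc _ = ∑ s : Finset (Fin d), ∑ m ∈ B, f m * ((-1 : ℝ) ^ (d - s.card) *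
          ∏ i, (if i ∈ s then (if k i + 1 = m i then (1:ℝ) else 0)
            else if k i = m i then 1 else 0)) := by
          refine Finset.sum_congr rfl fun s _ => ?_
          rw [hrep (fun i => if i ∈ s then k i + 1 else k i), Finset.mul_sum]
          · refine Finset.sum_congr rfl fun m _ => ?_
            rw [mul_left_comm]
            congr 2
            refine Finset.prod_congr rfl fun i _ => ?_
            by_cases h : i ∈ s <;> simp [h]
          · intro i
            have := hk' i
            split_ifs <;> omega
      _ = _ := by
          rw [Finset.sum_comm]
          refine Finset.sum_congr rfl fun m _ => ?_
          rw [← Finset.mul_sum, alternating_prod]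
  rw [Finset.sum_congr rfl hcell, Finset.sum_comm, hrep n fun i => le_rfl]
  refine Finset.sum_congr rfl fun m _ => ?_
  rw [← Finset.mul_sum]
  by_cases hm : ∃ i, m i = 0
  · rw [hf m hm, zero_mul, zero_mul]
  · push Not at hm
    congr 1
    rw [← Finset.prod_univ_sum (fun i => Finset.range (n i))
      (fun i j => (if j + 1 = m i then (1:ℝ) else 0) - if j = m i then 1 else 0)]
    refine Finset.prod_congr rfl fun i _ => ?_
    rw [Finset.sum_range_sub (fun j => if j = m i then (1:ℝ) else 0)]
    simp [(hm i).symm]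

/-- Grid version of a copula: along grids starting at `0` the cells have nonnegative mass, and
their masses add up to the value of the copula. -/
lemma copula_grid {d : ℕ} {C : (Fin d → ℝ) → ℝ} (hC : IsCopula d C) (g : Fin d → ℕ → ℝ)
    (hg : ∀ i, Monotone (g i)) (hg01 : ∀ i j, g i j ∈ Icc (0:ℝ) 1) (hg0 : ∀ i, g i 0 = 0) :
    (∀ k, 0 ≤ cellSum (fun k => C fun i => g i (k i)) k) ∧
    ∀ n : Fin d → ℕ, ∑ k ∈ Fintype.piFinset (fun i => Finset.range (n i)),
      cellSum (fun k => C fun i => g i (k i)) k = C fun i => g i (n i) := by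
  refine ⟨fun k => ?_, fun n => sum_cellSum (fun k => C fun i => g i (k i)) ?_ n⟩
  · have := hC.2.1 (fun i => g i (k i)) (fun i => g i (k i + 1)) (fun i => hg01 _ _)
      (fun i => hg01 _ _) (fun i => hg i (Nat.le_succ _))
    unfold cellSum
    simpa only [apply_ite (g _)] using this
  · rintro k ⟨i, hi⟩
    exact hC.1 _ (fun i => hg01 _ _) ⟨i, by rw [hi, hg0]⟩

/-- Copulas are monotone and Lipschitz. With the masses of the grid `0 ≤ v ≤ u ≤ 1`, the Lipschitz
bound is a union bound over the slabs `v i < x i ≤ u i`. -/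
lemma copula_lipschitz {d : ℕ} {C : (Fin d → ℝ) → ℝ} (hC : IsCopula d C) (u v : Fin d → ℝ)
    (hu : ∀ i, u i ∈ Icc (0:ℝ) 1) (hv : ∀ i, v i ∈ Icc (0:ℝ) 1) (hvu : ∀ i, v i ≤ u i) :
    C v ≤ C u ∧ C u - C v ≤ ∑ i, (u i - v i) := by
  set g : Fin d → ℕ → ℝ := fun i j => match j with
    | 0 => 0
    | 1 => v i
    | 2 => u i
    | _ => 1 with hgdef
  have hgm : ∀ i, Monotone (g i) := by
    intro i
    refine monotone_nat_of_le_succ fun j => ?_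
    match j with
    | 0 => exact (hv i).1
    | 1 => exact hvu i
    | 2 => exact (hu i).2
    | j + 3 => exact le_rfl
  have hg01 : ∀ i j, g i j ∈ Icc (0:ℝ) 1 := by
    intro i j
    match j with
    | 0 => exact ⟨le_rfl, zero_le_one⟩
    | 1 => exact hv i
    | 2 => exact hu i
    | j + 3 => exact ⟨zero_le_one, le_rfl⟩
  obtain ⟨hpos, hsum⟩ := copula_grid hC g hgm hg01 fun i => rfl
  set c := cellSum (fun k => C fun i => g i (k i)) with hc
  set T := Fintype.piFinset (fun _ : Fin d => Finset.range 2) with hT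
  set S := Fintype.piFinset (fun _ : Fin d => Finset.range 1) with hS
  have hST : S ⊆ T := Fintype.piFinset_subset _ _ fun i => Finset.range_subset_range.2 (by norm_num)
  have eT : ∑ k ∈ T, c k = C u := hsum fun _ => 2
  have eS : ∑ k ∈ S, c k = C v := hsum fun _ => 1
  have ediff : ∑ k ∈ T \ S, c k = C u - C v := by
    rw [← eT, ← eS, ← Finset.sum_sdiff hST]
    ring
  refine ⟨?_, ?_⟩
  · have := Finset.sum_nonneg (s := T \ S) fun k _ => hpos k
    linarith
  · set b : Fin d → ℕ → Finset (Fin d → ℕ) := fun i l =>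
      Fintype.piFinset (fun j => Finset.range (if j = i then l else 3)) with hb
    have hbs : ∀ i, b i 1 ⊆ b i 2 := by
      intro i
      refine Fintype.piFinset_subset _ _ fun j => Finset.range_subset_range.2 ?_
      split_ifs <;> norm_num
    have eb : ∀ i, ∑ k ∈ b i 2 \ b i 1, c k = u i - v i := by
      intro i
      have e2 : ∑ k ∈ b i 2, c k = u i := by
        rw [hsum fun j => if j = i then 2 else 3, ← hC.2.2 i (u i) (hu i)]
        congr 1
        ext j
        by_cases h : j = i
        · subst h
          simp [hgdef]
        · simp [hgdef, h]
      have e1 : ∑ k ∈ b i 1, c k = v i := by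
        rw [hsum fun j => if j = i then 1 else 3, ← hC.2.2 i (v i) (hv i)]
        congr 1
        ext j
        by_cases h : j = i
        · subst h
          simp [hgdef]
        · simp [hgdef, h]
      rw [← e2, ← e1, ← Finset.sum_sdiff (hbs i)]
      ring
    rw [← ediff]
    calc ∑ k ∈ T \ S, c k
        ≤ ∑ k ∈ T \ S, ∑ i, (if k ∈ b i 2 \ b i 1 then c k else 0) := by
          refine Finset.sum_le_sum fun k hk => ?_
          rw [Finset.mem_sdiff, hT, hS, Fintype.mem_piFinset, Fintype.mem_piFinset] at hk
          obtain ⟨hk2, hk1⟩ := hk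
          push Not at hk1
          obtain ⟨i, hi⟩ := hk1
          have hmem : k ∈ b i 2 \ b i 1 := by
            rw [Finset.mem_sdiff, hb, Fintype.mem_piFinset, Fintype.mem_piFinset]
            refine ⟨fun j => ?_, fun h => hi ?_⟩
            · have := Finset.mem_range.1 (hk2 j)
              rw [Finset.mem_range]
              split_ifs <;> omega
            · simpa using h i
          calc c k = if k ∈ b i 2 \ b i 1 then c k else 0 := (if_pos hmem).symm
            _ ≤ _ := Finset.single_le_sum
                (f := fun i => if k ∈ b i 2 \ b i 1 then c k else 0)
                (fun i _ => by split_ifs; exacts [hpos k, le_rfl])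
                (Finset.mem_univ i)
      _ = ∑ i, ∑ k ∈ T \ S, (if k ∈ b i 2 \ b i 1 then c k else 0) := Finset.sum_comm
      _ ≤ ∑ i, ∑ k ∈ b i 2 \ b i 1, c k := by
          refine Finset.sum_le_sum fun i _ => ?_
          rw [← Finset.sum_filter]
          refine Finset.sum_le_sum_of_subset_of_nonneg ?_ fun k _ _ => hpos k
          intro k hk
          exact (Finset.mem_filter.1 hk).2
      _ = ∑ i, (u i - v i) := Finset.sum_congr rfl fun i _ => eb i

/-! ### The probability measure of a copula -/

/-- Discretization of a copula: a probability measure on the cube whose distribution function at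
`u` is the copula at `u` rounded down to the grid of mesh `1 / N`. -/
lemma exists_discrete_copula {d : ℕ} (hd : 0 < d) {C : (Fin d → ℝ) → ℝ} (hC : IsCopula d C)
    (N : ℕ) (hN : 0 < N) :
    ∃ P : ProbabilityMeasure (Fin d → unitInterval), ∀ u : Fin d → unitInterval,
      (P : Measure (Fin d → unitInterval)) {x | ∀ i, x i ≤ u i}
        = ENNReal.ofReal (C fun i => (⌊(N:ℝ) * (u i : ℝ)⌋₊ : ℝ) / N) := by
  have hN' : (0:ℝ) < N := by exact_mod_cast hN
  set g : Fin d → ℕ → ℝ := fun _ j => min ((j:ℝ) / N) 1 with hgdef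
  have hgm : ∀ i, Monotone (g i) := by
    intro i a b hab
    simp only [hgdef]
    gcongr
  have hg01 : ∀ i j, g i j ∈ Icc (0:ℝ) 1 := fun i j =>
    ⟨le_min (by positivity) zero_le_one, min_le_right _ _⟩
  obtain ⟨hpos, hsum⟩ := copula_grid hC g hgm hg01 fun i => by simp [hgdef]
  set c := cellSum (fun k => C fun i => g i (k i)) with hc
  set B := Fintype.piFinset (fun _ : Fin d => Finset.range N) with hB
  set pt : (Fin d → ℕ) → (Fin d → unitInterval) :=
    fun k i => ⟨g i (k i + 1), hg01 i (k i + 1)⟩ with hpt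
  set M : Measure (Fin d → unitInterval) :=
    ∑ k ∈ B, ENNReal.ofReal (c k) • Measure.dirac (pt k) with hM
  have hmeas : ∀ u : Fin d → unitInterval,
      MeasurableSet {x : Fin d → unitInterval | ∀ i, x i ≤ u i} :=
    fun u => measurableSet_Iic (a := u)
  have hMu : ∀ u : Fin d → unitInterval, M {x | ∀ i, x i ≤ u i}
      = ENNReal.ofReal (C fun i => (⌊(N:ℝ) * (u i : ℝ)⌋₊ : ℝ) / N) := by
    intro u
    have hfl : ∀ i, ⌊(N:ℝ) * (u i : ℝ)⌋₊ ≤ N := fun i =>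
      Nat.floor_le_of_le (mul_le_of_le_one_right hN'.le (u i).2.2)
    have hval : (fun i => (⌊(N:ℝ) * (u i : ℝ)⌋₊ : ℝ) / N)
        = fun i => g i ⌊(N:ℝ) * (u i : ℝ)⌋₊ := by
      ext i
      simp only [hgdef]
      rw [min_eq_left]
      rw [div_le_one hN']
      exact_mod_cast hfl i
    rw [hval, ← hsum, ENNReal.ofReal_sum_of_nonneg fun k _ => hpos k, hM,
      Measure.finsetSum_apply]
    have hset : Fintype.piFinset (fun i => Finset.range ⌊(N:ℝ) * (u i : ℝ)⌋₊)
        = B.filter (fun k => ∀ i, pt k i ≤ u i) := by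
      ext k
      simp only [hB, Finset.mem_filter, Fintype.mem_piFinset, Finset.mem_range]
      have hiff : ∀ i, k i < N → (pt k i ≤ u i ↔ k i < ⌊(N:ℝ) * (u i : ℝ)⌋₊) := by
        intro i hi
        rw [← Subtype.coe_le_coe]
        simp only [hpt, hgdef]
        rw [min_eq_left, div_le_iff₀ hN', ← Nat.succ_le_iff, Nat.le_floor_iff, mul_comm]
        · exact mul_nonneg hN'.le (u i).2.1
        · rw [div_le_one hN']
          exact_mod_cast hi
      constructor
      · intro h
        have h' : ∀ i, k i < N := fun i => (h i).trans_le (hfl i)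
        exact ⟨h', fun i => (hiff i (h' i)).2 (h i)⟩
      · rintro ⟨h', h⟩ i
        exact (hiff i (h' i)).1 (h i)
    rw [hset, Finset.sum_filter]
    refine Finset.sum_congr rfl fun k _ => ?_
    rw [Measure.smul_apply, Measure.dirac_apply' _ (hmeas u), smul_eq_mul]
    by_cases h : ∀ i, pt k i ≤ u i
    · rw [indicator_of_mem (by exact h), if_pos h, Pi.one_apply, mul_one]
    · rw [indicator_of_notMem (by exact h), if_neg h, mul_zero]
  have hprob : IsProbabilityMeasure M := by
    constructor
    have h1 := hMu fun _ => 1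
    have huniv : {x : Fin d → unitInterval | ∀ i, x i ≤ (fun _ => 1 : Fin d → unitInterval) i}
        = univ := eq_univ_of_forall fun x i => unitInterval.le_one'
    rw [huniv] at h1
    rw [h1]
    have h2 := hC.2.2 ⟨0, hd⟩ 1 ⟨zero_le_one, le_rfl⟩
    simp only [ite_self] at h2
    simp [hN'.ne', h2]
  exact ⟨⟨M, hprob⟩, hMu⟩

/-- Every copula is the distribution function of a probability measure on the cube, obtained as a
weak limit of its discretizations. -/
lemma exists_copula_measure {d : ℕ} (hd : 0 < d) {C : (Fin d → ℝ) → ℝ} (hC : IsCopula d C) :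
    ∃ P : ProbabilityMeasure (Fin d → unitInterval), ∀ u : Fin d → unitInterval,
      (P : Measure (Fin d → unitInterval)) {x | ∀ i, x i ≤ u i}
        = ENNReal.ofReal (C fun i => (u i : ℝ)) := by
  choose Q hQ using fun n : ℕ => exists_discrete_copula hd hC (n + 1) n.succ_pos
  -- a limit point of the sequence along an ultrafilter
  set L : Ultrafilter ℕ := Filter.hyperfilter ℕ with hL
  have hLtop : (L : Filter ℕ) ≤ Filter.atTop := Nat.hyperfilter_le_atTop
  obtain ⟨P, -, hP⟩ := isCompact_univ.ultrafilter_le_nhds (L.map Q) (by simp)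
  have hPlim : Filter.Tendsto Q L (nhds P) := hP
  have hval : ∀ u : Fin d → unitInterval, Filter.Tendsto
      (fun n => (Q n : Measure (Fin d → unitInterval)) {x | ∀ i, x i ≤ u i}) L
      (nhds (ENNReal.ofReal (C fun i => (u i : ℝ)))) := by
    intro u
    refine Filter.Tendsto.mono_left ?_ hLtop
    simp only [hQ]
    refine ENNReal.tendsto_ofReal ?_
    have hbound : ∀ n : ℕ, C (fun i => (u i : ℝ)) - d * (1 / ((n:ℝ) + 1))
          ≤ C (fun i => (⌊((n + 1 : ℕ):ℝ) * (u i : ℝ)⌋₊ : ℝ) / ((n + 1 : ℕ):ℝ)) ∧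
        C (fun i => (⌊((n + 1 : ℕ):ℝ) * (u i : ℝ)⌋₊ : ℝ) / ((n + 1 : ℕ):ℝ))
          ≤ C fun i => (u i : ℝ) := by
      intro n
      have hn : (0:ℝ) < ((n + 1 : ℕ) : ℝ) := by positivity
      have hle : ∀ i, (⌊((n + 1 : ℕ):ℝ) * (u i : ℝ)⌋₊ : ℝ) / ((n + 1 : ℕ):ℝ) ≤ (u i : ℝ) := by
        intro i
        rw [div_le_iff₀ hn, mul_comm (u i : ℝ)]
        exact Nat.floor_le (mul_nonneg hn.le (u i).2.1)
      have hge : ∀ i, (u i : ℝ) - (⌊((n + 1 : ℕ):ℝ) * (u i : ℝ)⌋₊ : ℝ) / ((n + 1 : ℕ):ℝ)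
          ≤ 1 / ((n:ℝ) + 1) := by
        intro i
        have h := (Nat.lt_floor_add_one (((n + 1 : ℕ):ℝ) * (u i : ℝ))).le
        have : (u i : ℝ) ≤ ((⌊((n + 1 : ℕ):ℝ) * (u i : ℝ)⌋₊ : ℝ) + 1) / ((n + 1 : ℕ):ℝ) := by
          rw [le_div_iff₀ hn, mul_comm (u i : ℝ)]
          exact h
        rw [add_div] at this
        push_cast at this ⊢
        linarith
      obtain ⟨h1, h2⟩ := copula_lipschitz hC (fun i => (u i : ℝ))
        (fun i => (⌊((n + 1 : ℕ):ℝ) * (u i : ℝ)⌋₊ : ℝ) / ((n + 1 : ℕ):ℝ)) (fun i => (u i).2)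
        (fun i => ⟨by positivity, (hle i).trans (u i).2.2⟩) hle
      refine ⟨?_, h1⟩
      have h3 : ∑ i : Fin d, ((u i : ℝ) - (⌊((n + 1 : ℕ):ℝ) * (u i : ℝ)⌋₊ : ℝ) / ((n + 1 : ℕ):ℝ))
          ≤ d * (1 / ((n:ℝ) + 1)) := by
        refine (Finset.sum_le_sum fun i _ => hge i).trans ?_
        simp
      linarith
    refine tendsto_of_tendsto_of_tendsto_of_le_of_le ?_ tendsto_const_nhds
      (fun n => (hbound n).1) (fun n => (hbound n).2)
    have := (tendsto_one_div_add_atTop_nhds_zero_nat (𝕜 := ℝ)).const_mul (d:ℝ)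
    simpa using this.const_sub (C fun i => (u i : ℝ))
  refine ⟨P, fun u => le_antisymm ?_ ?_⟩
  · -- enlarge to the open box with corner `u + ε`, and let `ε → 0`
    have hε : ∀ n : ℕ, (P : Measure (Fin d → unitInterval)) {x | ∀ i, x i ≤ u i}
        ≤ ENNReal.ofReal (C (fun i => (u i : ℝ)) + d * (1 / ((n:ℝ) + 1))) := by
      intro n
      set ε : ℝ := 1 / ((n:ℝ) + 1) with hεdef
      have hεpos : 0 < ε := by positivity
      set u' : Fin d → unitInterval := fun i =>
        ⟨min ((u i : ℝ) + ε) 1, le_min (add_nonneg (u i).2.1 hεpos.le) zero_le_one,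
          min_le_right _ _⟩ with hu'
      have hopen : IsOpen {x : Fin d → unitInterval | ∀ i, (x i : ℝ) < u i + ε} := by
        have : {x : Fin d → unitInterval | ∀ i, (x i : ℝ) < u i + ε}
            = ⋂ i, {x : Fin d → unitInterval | (x i : ℝ) < u i + ε} := by
          ext x
          simp
        rw [this]
        exact isOpen_iInter_of_finite fun i => isOpen_lt (by fun_prop) (by fun_prop)
      calc (P : Measure (Fin d → unitInterval)) {x | ∀ i, x i ≤ u i}
          ≤ (P : Measure (Fin d → unitInterval)) {x | ∀ i, (x i : ℝ) < u i + ε} := by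
            refine measure_mono fun x hx i => ?_
            have : (x i : ℝ) ≤ u i := hx i
            linarith
        _ ≤ (L : Filter ℕ).liminf fun n =>
              (Q n : Measure (Fin d → unitInterval)) {x | ∀ i, (x i : ℝ) < u i + ε} :=
            ProbabilityMeasure.le_liminf_measure_open_of_tendsto hPlim hopen
        _ ≤ (L : Filter ℕ).liminf fun n =>
              (Q n : Measure (Fin d → unitInterval)) {x | ∀ i, x i ≤ u' i} := by
            refine Filter.liminf_le_liminf (Filter.Eventually.of_forall fun n => ?_)
            refine measure_mono fun x hx i => ?_
            exact le_min (hx i).le (x i).2.2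
        _ = ENNReal.ofReal (C fun i => (u' i : ℝ)) := (hval u').liminf_eq
        _ ≤ _ := by
            refine ENNReal.ofReal_le_ofReal ?_
            have h := (copula_lipschitz hC (fun i => (u' i : ℝ)) (fun i => (u i : ℝ))
              (fun i => (u' i).2) (fun i => (u i).2)
              (fun i => le_min (by linarith) (u i).2.2)).2
            have h3 : ∑ i : Fin d, ((u' i : ℝ) - u i) ≤ d * ε := by
              refine (Finset.sum_le_sum (g := fun _ => ε) fun i _ => ?_).trans (by simp)
              have : (u' i : ℝ) ≤ u i + ε := min_le_left _ _
              linarith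
            linarith
    refine ge_of_tendsto' (ENNReal.tendsto_ofReal (f := Filter.atTop) ?_) hε
    have := (tendsto_one_div_add_atTop_nhds_zero_nat (𝕜 := ℝ)).const_mul (d:ℝ)
    simpa using this.const_add (C fun i => (u i : ℝ))
  · rw [← (hval u).limsup_eq]
    exact ProbabilityMeasure.limsup_measure_closed_le_of_tendsto hPlim (isClosed_Iic (a := u))

/-! ### The comonotone coupling induced by the copula -/

/-- A probability measure on `ℝ^d` is determined by its joint distribution function. -/
lemma ext_of_joint_cdf {d : ℕ} (μ ν : Measure (Fin d → ℝ)) [IsProbabilityMeasure μ]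
    [IsProbabilityMeasure ν]
    (h : ∀ x : Fin d → ℝ, μ {y | ∀ i, y i ≤ x i} = ν {y | ∀ i, y i ≤ x i}) : μ = ν := by
  have hspan : ∀ _ : Fin d, IsCountablySpanning (range (Iic : ℝ → Set ℝ)) := fun _ =>
    ⟨fun n : ℕ => Iic (n:ℝ), fun n => ⟨_, rfl⟩, iUnion_eq_univ_iff.2 fun x => exists_nat_ge x⟩
  have hgen := generateFrom_eq_pi (α := fun _ : Fin d => ℝ)
    (C := fun _ => range (Iic : ℝ → Set ℝ))
    (fun _ => by rw [← borel_eq_generateFrom_Iic, ← BorelSpace.measurable_eq]) hspan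
  refine ext_of_generate_finite _ hgen.symm (IsPiSystem.pi fun _ => isPiSystem_Iic) ?_ (by simp)
  rintro _ ⟨s, hs, rfl⟩
  choose x hx using fun i => hs i (mem_univ i)
  have : univ.pi s = {y | ∀ i, y i ≤ x i} := by
    ext y
    simp [← hx, mem_pi]
  rw [this]
  exact h x

/-- The one-dimensional marginals of a copula measure are uniform on `(0, 1)`. -/
lemma map_eval_copula {d : ℕ} {C : (Fin d → ℝ) → ℝ} (hC : IsCopula d C)
    (P : ProbabilityMeasure (Fin d → unitInterval))
    (hP : ∀ u : Fin d → unitInterval, (P : Measure (Fin d → unitInterval)) {x | ∀ i, x i ≤ u i}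
        = ENNReal.ofReal (C fun i => (u i : ℝ))) (i : Fin d) :
    (P : Measure (Fin d → unitInterval)).map (fun u => (u i : ℝ))
      = volume.restrict (Ioo (0:ℝ) 1) := by
  have hmeas : Measurable fun u : Fin d → unitInterval => (u i : ℝ) := by fun_prop
  refine Measure.ext_of_Iic _ _ fun t => ?_
  rw [Measure.map_apply hmeas measurableSet_Iic, volume_Ioo_inter_Iic]
  rcases lt_or_ge t 0 with ht | ht
  · have : (fun u : Fin d → unitInterval => (u i : ℝ)) ⁻¹' Iic t = ∅ := by
      ext u
      simpa using ht.trans_le (u i).2.1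
    rw [this, measure_empty, ENNReal.ofReal_of_nonpos ((min_le_left _ _).trans ht.le)]
  · have hm : min t 1 ∈ Icc (0:ℝ) 1 := ⟨le_min ht zero_le_one, min_le_right _ _⟩
    have h1 := hP fun j => if j = i then ⟨min t 1, hm⟩ else 1
    have hset : {x : Fin d → unitInterval | ∀ j, x j ≤ if j = i then ⟨min t 1, hm⟩ else 1}
        = (fun u : Fin d → unitInterval => (u i : ℝ)) ⁻¹' Iic t := by
      ext x
      constructor
      · intro hx
        have hxi := hx i
        rw [if_pos rfl] at hxi
        exact (show (x i : ℝ) ≤ min t 1 from hxi).trans (min_le_left _ _)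
      · intro hx j
        split_ifs with hj
        · subst hj
          exact le_min hx (x j).2.2
        · exact unitInterval.le_one'
    rw [hset] at h1
    rw [h1]
    refine congrArg ENNReal.ofReal (Eq.trans (congrArg C ?_) (hC.2.2 i _ hm))
    ext j
    split_ifs <;> simp

/-- A measure with copula `C` is the image of the copula measure under its quantile functions,
applied coordinatewise. -/
lemma map_copula_quantile {d : ℕ} {C : (Fin d → ℝ) → ℝ} (hC : IsCopula d C)
    (P : ProbabilityMeasure (Fin d → unitInterval))
    (hP : ∀ u : Fin d → unitInterval, (P : Measure (Fin d → unitInterval)) {x | ∀ i, x i ≤ u i}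
        = ENNReal.ofReal (C fun i => (u i : ℝ)))
    (μ : Measure (Fin d → ℝ)) [IsProbabilityMeasure μ] (F : Fin d → ℝ → ℝ)
    (hF : ∀ i t, F i t = (μ.map (fun x => x i) (Iic t)).toReal)
    (hμC : ∀ x : Fin d → ℝ, (μ {y | ∀ i, y i ≤ x i}).toReal = C (fun i => F i (x i))) :
    (P : Measure (Fin d → unitInterval)).map (fun u i => qcut (F i) (u i)) = μ := by
  have hprob : ∀ i, IsProbabilityMeasure (μ.map fun x => x i) := fun i =>
    Measure.isProbabilityMeasure_map (measurable_pi_apply i).aemeasurable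
  have hq : ∀ i, Measurable (qcut (F i)) := fun i => measurable_qcut _ _ (hF i)
  have hmeas : Measurable fun (u : Fin d → unitInterval) i => qcut (F i) (u i) :=
    measurable_pi_lambda _ fun i => (hq i).comp (by fun_prop)
  have := Measure.isProbabilityMeasure_map (μ := (P : Measure (Fin d → unitInterval)))
    hmeas.aemeasurable
  refine ext_of_joint_cdf _ _ fun x => ?_
  have hbox : MeasurableSet {y : Fin d → ℝ | ∀ i, y i ≤ x i} := measurableSet_Iic (a := x)
  rw [Measure.map_apply hmeas hbox]
  have hF01 : ∀ i, F i (x i) ∈ Icc (0:ℝ) 1 := fun i => by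
    rw [hF]
    exact ⟨ENNReal.toReal_nonneg,
      ENNReal.toReal_le_of_le_ofReal zero_le_one (by simpa using prob_le_one)⟩
  have hae : ∀ᵐ u ∂(P : Measure (Fin d → unitInterval)), ∀ i, (u i : ℝ) ∈ Ioo (0:ℝ) 1 := by
    rw [ae_all_iff]
    intro i
    have h := ae_restrict_mem (μ := volume) (measurableSet_Ioo (a := (0:ℝ)) (b := 1))
    rw [← map_eval_copula hC P hP i] at h
    have hm : Measurable fun u : Fin d → unitInterval => (u i : ℝ) := by fun_prop
    exact ae_of_ae_map hm.aemeasurable h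
  have hcongr : (P : Measure (Fin d → unitInterval))
      ((fun (u : Fin d → unitInterval) i => qcut (F i) (u i)) ⁻¹' {y | ∀ i, y i ≤ x i})
      = (P : Measure (Fin d → unitInterval)) {u | ∀ i, u i ≤ ⟨F i (x i), hF01 i⟩} := by
    refine measure_congr ?_
    filter_upwards [hae] with u hu
    refine propext (forall_congr' fun i => ?_)
    change qcut (F i) (u i) ≤ x i ↔ (u i : ℝ) ≤ F i (x i)
    rw [qcut_of_mem _ (hu i), qinv_le_iff _ _ (hF i) (hu i)]
  rw [hcongr, hP, ← hμC, ENNReal.ofReal_toReal (measure_ne_top _ _)]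

/-- if `μ, ν` on `ℝ^d` share the same copula `C`, then (with the `p`-norm)
`W_p(μ,ν)^p = ∫₀¹ ∑ i |F_i⁻¹(u) - G_i⁻¹(u)|^p du`. -/
theorem wasserstein_shared_copula (d : ℕ) (hd : 1 < d) (p : ℝ) (hp : 1 ≤ p)
    (μ ν : MeasureTheory.Measure (Fin d → ℝ)) [IsProbabilityMeasure μ] [IsProbabilityMeasure ν]
    (hμmom : ∫⁻ x, ENNReal.ofReal (∑ i, |x i| ^ p) ∂μ ≠ ⊤)
    (hνmom : ∫⁻ x, ENNReal.ofReal (∑ i, |x i| ^ p) ∂ν ≠ ⊤)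
    (F G : Fin d → ℝ → ℝ)
    (hF : ∀ i t, F i t = (μ {x | x i ≤ t}).toReal)
    (hG : ∀ i t, G i t = (ν {x | x i ≤ t}).toReal)
    (C : (Fin d → ℝ) → ℝ) (hC : IsCopula d C)
    (hμC : ∀ x : Fin d → ℝ, (μ {y | ∀ i, y i ≤ x i}).toReal = C (fun i => F i (x i)))
    (hνC : ∀ y : Fin d → ℝ, (ν {z | ∀ i, z i ≤ y i}).toReal = C (fun i => G i (y i))) :
    WpPowD d p μ ν
      = ∫⁻ u in Ioo (0:ℝ) 1,
          ENNReal.ofReal (∑ i, |qinv (F i) u - qinv (G i) u| ^ p) := by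
  have hF' : ∀ i t, F i t = (μ.map (fun x => x i) (Iic t)).toReal := fun i t => by
    rw [hF, Measure.map_apply (measurable_pi_apply i) measurableSet_Iic]
    rfl
  have hG' : ∀ i t, G i t = (ν.map (fun x => x i) (Iic t)).toReal := fun i t => by
    rw [hG, Measure.map_apply (measurable_pi_apply i) measurableSet_Iic]
    rfl
  have hμp : ∀ i, IsProbabilityMeasure (μ.map fun x => x i) := fun i =>
    Measure.isProbabilityMeasure_map (measurable_pi_apply i).aemeasurable
  have hνp : ∀ i, IsProbabilityMeasure (ν.map fun x => x i) := fun i =>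
    Measure.isProbabilityMeasure_map (measurable_pi_apply i).aemeasurable
  have hqF : ∀ i, Measurable (qcut (F i)) := fun i => measurable_qcut _ _ (hF' i)
  have hqG : ∀ i, Measurable (qcut (G i)) := fun i => measurable_qcut _ _ (hG' i)
  -- both sides split into sums over the coordinates
  have hsplit : ∀ π : Measure ((Fin d → ℝ) × (Fin d → ℝ)),
      ∫⁻ z, ENNReal.ofReal (∑ i, |z.1 i - z.2 i| ^ p) ∂π
        = ∑ i, ∫⁻ z, ENNReal.ofReal (|z.1 i - z.2 i| ^ p) ∂π := by
    intro π
    rw [← lintegral_finsetSum _ fun i _ => by fun_prop]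
    exact lintegral_congr fun z => ENNReal.ofReal_sum_of_nonneg fun i _ => by positivity
  have hrhs : ∫⁻ u in Ioo (0:ℝ) 1, ENNReal.ofReal (∑ i, |qinv (F i) u - qinv (G i) u| ^ p)
      = ∑ i, ∫⁻ u in Ioo (0:ℝ) 1, ENNReal.ofReal (|qcut (F i) u - qcut (G i) u| ^ p) := by
    rw [← lintegral_finsetSum _ fun i _ => by have := hqF i; have := hqG i; fun_prop]
    refine setLIntegral_congr_fun measurableSet_Ioo fun u hu => ?_
    simp only [qcut_of_mem _ hu]
    exact ENNReal.ofReal_sum_of_nonneg fun i _ => by positivity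
  rw [hrhs]
  unfold WpPowD
  refine le_antisymm ?_ (le_iInf₂ fun π hπ => ?_)
  · obtain ⟨P, hP⟩ := exists_copula_measure (by omega) hC
    set X : (Fin d → unitInterval) → (Fin d → ℝ) := fun u i => qcut (F i) (u i) with hX
    set Y : (Fin d → unitInterval) → (Fin d → ℝ) := fun u i => qcut (G i) (u i) with hY
    have hXm : Measurable X := measurable_pi_lambda _ fun i => (hqF i).comp (by fun_prop)
    have hYm : Measurable Y := measurable_pi_lambda _ fun i => (hqG i).comp (by fun_prop)
    have hXY : Measurable fun u => (X u, Y u) := hXm.prodMk hYm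
    refine (iInf₂_le ((P : Measure (Fin d → unitInterval)).map fun u => (X u, Y u)) ?_).trans ?_
    · refine ⟨?_, ?_⟩
      · rw [Measure.map_map measurable_fst hXY]
        exact map_copula_quantile hC P hP μ F hF' hμC
      · rw [Measure.map_map measurable_snd hXY]
        exact map_copula_quantile hC P hP ν G hG' hνC
    · rw [hsplit]
      refine Finset.sum_le_sum fun i _ => le_of_eq ?_
      rw [lintegral_map (by fun_prop) hXY, ← map_eval_copula hC P hP i, lintegral_map]
      · have := hqF i
        have := hqG i
        fun_prop
      · fun_prop
  · rw [hsplit]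
    refine Finset.sum_le_sum fun i _ => ?_
    have hz : Measurable fun z : (Fin d → ℝ) × (Fin d → ℝ) => (z.1 i, z.2 i) := by fun_prop
    have hπf : IsFiniteMeasure π := by
      refine ⟨?_⟩
      have h := congrArg (fun m : Measure (Fin d → ℝ) => m univ) hπ.1
      simp only [Measure.map_apply measurable_fst MeasurableSet.univ, preimage_univ,
        measure_univ] at h
      rw [h]
      exact ENNReal.one_lt_top
    refine (comonotone_lintegral_le p hp (π.map fun z => (z.1 i, z.2 i)) (qcut (F i)) (qcut (G i))
      (hqF i) (hqG i) (monotoneOn_qcut _ _ (hF' i)) (monotoneOn_qcut _ _ (hG' i)) ?_ ?_).trans_eq ?_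
    · rw [map_qcut _ _ (hF' i), Measure.map_map measurable_fst hz, ← hπ.1,
        Measure.map_map (measurable_pi_apply i) measurable_fst]
      rfl
    · rw [map_qcut _ _ (hG' i), Measure.map_map measurable_snd hz, ← hπ.2,
        Measure.map_map (measurable_pi_apply i) measurable_snd]
      rfl
    · rw [lintegral_map (by fun_prop) hz]
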